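/- Let G be a projection game and let h : V × Σ → [0,1] be deterministic (for each v ∈ V there is at most one β ∈ Σ with h(v,β) ≠ 0) with ‖h‖ > 0, and let ρ ∈ [0,1] be such that ‖Gh‖² = ρ·‖h‖². For τ ∈ [0,1] define h_τ : V × Σ → {0,1} by h_τ(v,β) = 1 if h(v,β)² > τ and h_τ(v,β) = 0 otherwise. Then: (i) for every v ∈ V, ∫₀¹ (∑_β h_τ(v,β))² dτ = (∑_β h(v,β))²; and (ii) ∫₀¹ ‖G h_τ‖² dτ ≥ (1 − √(1−ρ²))·‖h‖². -/

import Mathlib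

open Finset

/-- A projection game: finite nonempty question sets `Q1` (Alice) and `Q2` (Bob),
a finite nonempty alphabet `A`, and a probability mass function `μ` on triples
`(u, v, π)` where `π : A → Option A` encodes a projection constraint
(the answer pair `(α, β)` satisfies `π` iff `π β = some α`). -/
structure ProjGame where
  Q1 : Type
  Q2 : Type
  A : Type
  [fQ1 : Fintype Q1]
  [fQ2 : Fintype Q2]
  [fA : Fintype A]
  [neQ1 : Nonempty Q1]
  [neQ2 : Nonempty Q2]
  [neA : Nonempty A]
  [dQ1 : DecidableEq Q1]
  [dQ2 : DecidableEq Q2]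
  [dA : DecidableEq A]
  μ : Q1 × Q2 × (A → Option A) → ℝ
  μ_nonneg : ∀ x, 0 ≤ μ x
  μ_sum : ∑ x, μ x = 1

attribute [instance] ProjGame.fQ1 ProjGame.fQ2 ProjGame.fA
  ProjGame.neQ1 ProjGame.neQ2 ProjGame.neA ProjGame.dQ1 ProjGame.dQ2 ProjGame.dA

namespace ProjGame

variable (G : ProjGame)

/-- The `U`-marginal (Alice-side marginal) of `μ`. -/
noncomputable def wU (u : G.Q1) : ℝ := ∑ v, ∑ π, G.μ (u, v, π)

/-- The `V`-marginal (Bob-side marginal) of `μ`. -/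
noncomputable def wV (v : G.Q2) : ℝ := ∑ u, ∑ π, G.μ (u, v, π)

/-- The game operator: `(Gf)(u,α) = E_{(v,π)|u} [∑_{β : π β = some α} f (v,β)]`. -/
noncomputable def op (f : G.Q2 × G.A → ℝ) : G.Q1 × G.A → ℝ :=
  fun p =>
    (∑ v, ∑ π, G.μ (p.1, v, π) * ∑ β, if π β = some p.2 then f (v, β) else 0) / G.wU p.1

/-- Squared norm on functions on `U × Σ`: `‖g‖² = E_u [∑_α g(u,α)²]`. -/
noncomputable def normUsq (g : G.Q1 × G.A → ℝ) : ℝ := ∑ u, G.wU u * ∑ α, (g (u, α)) ^ 2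

/-- Squared norm on functions on `V × Σ`: `‖f‖² = E_v [∑_β f(v,β)²]`. -/
noncomputable def normVsq (f : G.Q2 × G.A → ℝ) : ℝ := ∑ v, G.wV v * ∑ β, (f (v, β)) ^ 2

/-- Inner product `⟨g, g'⟩ = E_u [∑_α g(u,α) g'(u,α)]`. -/
noncomputable def inn (g g' : G.Q1 × G.A → ℝ) : ℝ :=
  ∑ u, G.wU u * ∑ α, g (u, α) * g' (u, α)

/-- An assignment for Bob. -/
def IsBob (f : G.Q2 × G.A → ℝ) : Prop := (∀ p, 0 ≤ f p) ∧ ∀ v, ∑ β, f (v, β) = 1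

/-- An assignment for Alice. -/
def IsAlice (g : G.Q1 × G.A → ℝ) : Prop := (∀ p, 0 ≤ g p) ∧ ∀ u, ∑ α, g (u, α) = 1

/-- The value of the game: `val(G) = max ⟨g, Gf⟩` over assignments. -/
noncomputable def val : ℝ :=
  sSup { x | ∃ f g, G.IsBob f ∧ G.IsAlice g ∧ x = G.inn g (G.op f) }

/-- The collision value `‖G‖ = max_f ‖Gf‖` over assignments `f` for Bob. -/
noncomputable def collVal : ℝ :=
  sSup { x | ∃ f, G.IsBob f ∧ x = Real.sqrt (G.normUsq (G.op f)) }

/-- Product of projection constraints. -/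
def tensorC {A A' : Type} (π : A → Option A) (π' : A' → Option A') :
    A × A' → Option (A × A') :=
  fun b => (π b.1).bind fun a => (π' b.2).map fun a' => (a, a')

/-- The product (parallel repetition) of two projection games. -/
noncomputable def tensor (G H : ProjGame) : ProjGame where
  Q1 := G.Q1 × H.Q1
  Q2 := G.Q2 × H.Q2
  A := G.A × H.A
  μ := fun x =>
    ∑ y : (G.Q1 × G.Q2 × (G.A → Option G.A)) × (H.Q1 × H.Q2 × (H.A → Option H.A)),
      if ((y.1.1, y.2.1), (y.1.2.1, y.2.2.1), tensorC y.1.2.2 y.2.2.2) = x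
      then G.μ y.1 * H.μ y.2 else 0
  μ_nonneg := by
    intro x
    refine Finset.sum_nonneg fun y _ => ?_
    split
    · exact mul_nonneg (G.μ_nonneg _) (H.μ_nonneg _)
    · exact le_refl 0
  μ_sum := by
    rw [Finset.sum_comm]
    simp only [Finset.sum_ite_eq, Finset.mem_univ, if_true]
    rw [Fintype.sum_prod_type]
    calc (∑ y1, ∑ y2, G.μ y1 * H.μ y2)
        = (∑ y1, G.μ y1) * (∑ y2, H.μ y2) := by rw [Finset.sum_mul_sum]
      _ = 1 := by rw [G.μ_sum, H.μ_sum, mul_one]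

/-- `G.iterTensor k` is the `(k+1)`-fold parallel repetition `G^{⊗(k+1)}`. -/
noncomputable def iterTensor (G : ProjGame) : ℕ → ProjGame
  | 0 => G
  | n + 1 => G.tensor (G.iterTensor n)

/-- `val₊(G)`: supremum of values of vector assignments. -/
noncomputable def valPlus (G : ProjGame) : ℝ :=
  sSup { x | ∃ n : ℕ, 0 < n ∧ ∃ f : G.Q2 × G.A → Fin n → ℝ,
    (∀ p i, 0 ≤ f p i) ∧
    (∀ v, Real.sqrt (∑ i, (∑ β, f (v, β) i) ^ 2) ≤ 1) ∧
    x = Real.sqrt (∑ u, G.wU u * ∑ α, ∑ i, (G.op (fun q => f q i) (u, α)) ^ 2) }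

/-- `‖Th‖² = E_v [(∑_β h(v,β))²]`. -/
noncomputable def Tnormsq (G : ProjGame) (h : G.Q2 × G.A → ℝ) : ℝ :=
  ∑ v, G.wV v * (∑ β, h (v, β)) ^ 2

/-- `λ₊(G)`: supremum of `‖Gh‖/‖Th‖` over nonnegative `h` with `‖Th‖ > 0`. -/
noncomputable def lambdaPlus (G : ProjGame) : ℝ :=
  sSup { x | ∃ h : G.Q2 × G.A → ℝ, (∀ p, 0 ≤ h p) ∧
    0 < Real.sqrt (G.Tnormsq h) ∧
    x = Real.sqrt (G.normUsq (G.op h)) / Real.sqrt (G.Tnormsq h) }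

/-- The symmetrized distribution on `V × V` (with the constraints marginalized out). -/
noncomputable def msym (G : ProjGame) (v v' : G.Q2) : ℝ :=
  ∑ u, ((∑ π, G.μ (u, v, π)) * (∑ π', G.μ (u, v', π'))) / G.wU u

/-- `G` is `γ`-expanding: the Markov operator of the symmetrized constraint graph has
spectral gap at least `γ`, i.e. `|⟨x, Ax⟩| ≤ (1-γ) E_v[x(v)²]` for mean-zero `x`. -/
def IsExpanding (G : ProjGame) (γ : ℝ) : Prop :=
  ∀ x : G.Q2 → ℝ, (∑ v, G.wV v * x v) = 0 →
    |∑ v, ∑ v', G.msym v v' * x v * x v'| ≤ (1 - γ) * ∑ v, G.wV v * (x v) ^ 2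

/-- The symmetrized distribution on `(v, v', π, π')`. -/
noncomputable def msymFull (G : ProjGame) (v v' : G.Q2) (π π' : G.A → Option G.A) : ℝ :=
  ∑ u, (G.μ (u, v, π) * G.μ (u, v', π')) / G.wU u

/-- The value of the assignment `x` in the symmetrized game `G_sym`. -/
noncomputable def symValAssign (G : ProjGame) (x : G.Q2 → G.A) : ℝ :=
  ∑ v, ∑ v', ∑ π, ∑ π', G.msymFull v v' π π' *
    (if ∃ α, π (x v) = some α ∧ π' (x v') = some α then 1 else 0)

/-- The value of the symmetrized game `G_sym`. -/
noncomputable def symVal (G : ProjGame) : ℝ :=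
  sSup { r | ∃ x : G.Q2 → G.A, r = G.symValAssign x }

end ProjGame

noncomputable def chP (G : ProjGame) (f : G.Q2 × G.A → ℝ) (i : G.Q2 × (G.A → Option G.A))
    (α : G.A) : ℝ := ∑ β, if i.2 β = some α then f (i.1, β) else 0

lemma ch_norm (G : ProjGame) (f : G.Q2 × G.A → ℝ) :
    G.normUsq (G.op f) = ∑ u, ∑ i : G.Q2 × (G.A → Option G.A), ∑ j : G.Q2 × (G.A → Option G.A),
      (G.μ (u, i) * G.μ (u, j) / G.wU u) * ∑ α, chP G f i α * chP G f j α := by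
  unfold ProjGame.normUsq
  refine Finset.sum_congr rfl fun u _ => ?_
  have e : ∀ α, G.op f (u, α)
      = (∑ i : G.Q2 × (G.A → Option G.A), G.μ (u, i) * chP G f i α) / G.wU u := by
    intro α
    simp only [ProjGame.op, Fintype.sum_prod_type, chP]
  have e2 : ∀ W x : ℝ, W * (x / W) ^ 2 = x * x / W := by
    intro W x
    by_cases hW : W = 0
    · simp [hW]
    · field_simp
  rw [Finset.mul_sum]
  simp only [e, e2]
  simp only [Finset.sum_mul_sum]
  simp only [Finset.sum_div]
  rw [Finset.sum_comm]
  refine Finset.sum_congr rfl fun i _ => ?_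
  rw [Finset.sum_comm]
  refine Finset.sum_congr rfl fun j _ => ?_
  rw [Finset.mul_sum]
  refine Finset.sum_congr rfl fun α _ => ?_
  ring

lemma ch_wU (G : ProjGame) (u : G.Q1) :
    G.wU u = ∑ i : G.Q2 × (G.A → Option G.A), G.μ (u, i) := by
  simp only [ProjGame.wU, Fintype.sum_prod_type]

lemma ch_wU_nonneg (G : ProjGame) (u : G.Q1) : 0 ≤ G.wU u := by
  rw [ch_wU]; exact Finset.sum_nonneg fun i _ => G.μ_nonneg _

lemma ch_cancel (G : ProjGame) (u : G.Q1) (i : G.Q2 × (G.A → Option G.A)) :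
    G.μ (u, i) * G.wU u / G.wU u = G.μ (u, i) := by
  by_cases hW : G.wU u = 0
  · have : G.μ (u, i) = 0 := by
      rw [ch_wU, Finset.sum_eq_zero_iff_of_nonneg fun i _ => G.μ_nonneg _] at hW
      exact hW i (Finset.mem_univ _)
    simp [this]
  · field_simp

lemma ch_marg1 (G : ProjGame) (X : G.Q2 → ℝ) :
    ∑ u, ∑ i : G.Q2 × (G.A → Option G.A), ∑ j : G.Q2 × (G.A → Option G.A),
      (G.μ (u, i) * G.μ (u, j) / G.wU u) * X i.1 = ∑ v, G.wV v * X v := by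
  have : ∀ u, ∀ i : G.Q2 × (G.A → Option G.A), ∑ j : G.Q2 × (G.A → Option G.A),
      (G.μ (u, i) * G.μ (u, j) / G.wU u) * X i.1 = G.μ (u, i) * X i.1 := by
    intro u i
    rw [← Finset.sum_mul, ← Finset.sum_div, ← Finset.mul_sum, ← ch_wU, ch_cancel]
  simp only [this, Fintype.sum_prod_type, ProjGame.wV, Finset.sum_mul]
  rw [Finset.sum_comm]

lemma ch_marg2 (G : ProjGame) (X : G.Q2 → ℝ) :
    ∑ u, ∑ i : G.Q2 × (G.A → Option G.A), ∑ j : G.Q2 × (G.A → Option G.A),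
      (G.μ (u, i) * G.μ (u, j) / G.wU u) * X j.1 = ∑ v, G.wV v * X v := by
  rw [← ch_marg1]
  refine Finset.sum_congr rfl fun u _ => ?_
  rw [Finset.sum_comm]
  refine Finset.sum_congr rfl fun i _ => ?_
  refine Finset.sum_congr rfl fun j _ => ?_
  ring

lemma ch_ii (a : ℝ) (a' b' : ℝ) : IntervalIntegrable (fun τ : ℝ => if a > τ then (1:ℝ) else 0)
    MeasureTheory.volume a' b' := by
  apply Antitone.intervalIntegrable
  intro x y hxy
  dsimp only
  split_ifs <;> first | linarith | norm_num

lemma ch_int (a : ℝ) (ha : 0 ≤ a) (ha1 : a ≤ 1) :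
    ∫ τ in (0:ℝ)..1, (if a > τ then (1:ℝ) else 0) = a := by
  rw [← intervalIntegral.integral_add_adjacent_intervals (b := a) (ch_ii a _ _) (ch_ii a _ _)]
  have e1 : ∫ τ in (0:ℝ)..a, (if a > τ then (1:ℝ) else 0) = ∫ τ in (0:ℝ)..a, (1:ℝ) := by
    apply intervalIntegral.integral_congr_ae
    have : ∀ᵐ τ : ℝ, τ ≠ a := by simp [MeasureTheory.ae_iff]
    filter_upwards [this] with τ h1 h2
    rw [Set.uIoc_of_le ha] at h2
    rw [if_pos (lt_of_le_of_ne h2.2 h1)]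
  have e2 : ∫ τ in a..(1:ℝ), (if a > τ then (1:ℝ) else 0) = ∫ τ in a..(1:ℝ), (0:ℝ) := by
    apply intervalIntegral.integral_congr
    intro τ hτ
    rw [Set.uIcc_of_le ha1] at hτ
    exact if_neg (not_lt.mpr hτ.1)
  rw [e1, e2]
  simp

lemma ch_mulind (a b τ : ℝ) : (if a > τ then (1:ℝ) else 0) * (if b > τ then (1:ℝ) else 0)
    = if min a b > τ then (1:ℝ) else 0 := by
  by_cases h1 : a > τ <;> by_cases h2 : b > τ <;> simp [h1, h2]

/-- the pointwise inequality -/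
lemma ch_pt {ι : Type} [Fintype ι] (x y : ι → ℝ) (X Y : ℝ)
    (hx : ∑ α, x α ^ 2 ≤ X) (hy : ∑ α, y α ^ 2 ≤ Y) :
    (X + Y - 2 * ∑ α, min (x α ^ 2) (y α ^ 2)) ^ 2
      ≤ (X + Y - 2 * ∑ α, x α * y α) * (X + Y + 2 * ∑ α, x α * y α) := by
  have h1 : (∑ α, x α * y α) ^ 2
      ≤ (∑ α, min (x α ^ 2) (y α ^ 2)) * ∑ α, max (x α ^ 2) (y α ^ 2) := by
    apply Finset.sum_sq_le_sum_mul_sum_of_sq_le_mul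
    · intro i _; positivity
    · intro i _; positivity
    · intro i _; rw [min_mul_max]; apply le_of_eq; ring
  have h2 : (∑ α, min (x α ^ 2) (y α ^ 2)) + ∑ α, max (x α ^ 2) (y α ^ 2)
      = ∑ α, x α ^ 2 + ∑ α, y α ^ 2 := by
    simp only [← Finset.sum_add_distrib, min_add_max]
  have h3 : 0 ≤ ∑ α, min (x α ^ 2) (y α ^ 2) := Finset.sum_nonneg fun i _ => by positivity
  nlinarith

lemma ch_abs {ι : Type} [Fintype ι] (x y : ι → ℝ) (X Y : ℝ)
    (hx : ∑ α, x α ^ 2 ≤ X) (hy : ∑ α, y α ^ 2 ≤ Y) :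
    0 ≤ X + Y - 2 * ∑ α, x α * y α ∧ 0 ≤ X + Y + 2 * ∑ α, x α * y α := by
  have h1 : 0 ≤ ∑ α, (x α - y α) ^ 2 := Finset.sum_nonneg fun i _ => by positivity
  have h2 : 0 ≤ ∑ α, (x α + y α) ^ 2 := Finset.sum_nonneg fun i _ => by positivity
  have e1 : ∑ α, (x α - y α) ^ 2 = ∑ α, x α ^ 2 + ∑ α, y α ^ 2 - 2 * ∑ α, x α * y α := by
    rw [Finset.mul_sum, ← Finset.sum_add_distrib, ← Finset.sum_sub_distrib]
    exact Finset.sum_congr rfl fun i _ => by ring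
  have e2 : ∑ α, (x α + y α) ^ 2 = ∑ α, x α ^ 2 + ∑ α, y α ^ 2 + 2 * ∑ α, x α * y α := by
    rw [Finset.mul_sum, ← Finset.sum_add_distrib, ← Finset.sum_add_distrib]
    exact Finset.sum_congr rfl fun i _ => by ring
  constructor <;> linarith

lemma ch_P_single (G : ProjGame) (f : G.Q2 × G.A → ℝ) (b : G.Q2 → G.A)
    (hb : ∀ v β, β ≠ b v → f (v, β) = 0) (i : G.Q2 × (G.A → Option G.A)) (α : G.A) :
    chP G f i α = if i.2 (b i.1) = some α then f (i.1, b i.1) else 0 := by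
  unfold chP
  rw [Finset.sum_eq_single (b i.1)]
  · intro β _ hβ; simp [hb _ _ hβ]
  · simp

lemma ch_main {T : Type} [Fintype T] (q X Y S M : T → ℝ) (N ρ : ℝ) (hN : 0 ≤ N)
    (hq : ∀ t, 0 ≤ q t)
    (hp : ∀ t, (X t + Y t - 2 * M t) ^ 2 ≤ (X t + Y t - 2 * S t) * (X t + Y t + 2 * S t))
    (ha : ∀ t, 0 ≤ X t + Y t - 2 * S t) (hb : ∀ t, 0 ≤ X t + Y t + 2 * S t)
    (hX : ∑ t, q t * X t = N) (hY : ∑ t, q t * Y t = N) (hS : ∑ t, q t * S t = ρ * N) :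
    (1 - Real.sqrt (1 - ρ ^ 2)) * N ≤ ∑ t, q t * M t := by
  have key : (∑ t, q t * (X t + Y t - 2 * M t)) ^ 2
      ≤ (∑ t, q t * (X t + Y t - 2 * S t)) * ∑ t, q t * (X t + Y t + 2 * S t) := by
    apply Finset.sum_sq_le_sum_mul_sum_of_sq_le_mul
    · intro t _; exact mul_nonneg (hq t) (ha t)
    · intro t _; exact mul_nonneg (hq t) (hb t)
    · intro t _
      have := mul_le_mul_of_nonneg_left (hp t) (mul_nonneg (hq t) (hq t))
      nlinarith
  have e : ∀ Z : T → ℝ, ∑ t, q t * (X t + Y t + 2 * Z t) = 2 * N + 2 * ∑ t, q t * Z t := by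
    intro Z
    rw [Finset.mul_sum, two_mul N]
    nth_rewrite 1 [← hX]
    rw [← hY, ← Finset.sum_add_distrib, ← Finset.sum_add_distrib]
    exact Finset.sum_congr rfl fun i _ => by ring
  have e' : ∀ Z : T → ℝ, ∑ t, q t * (X t + Y t - 2 * Z t) = 2 * N - 2 * ∑ t, q t * Z t := by
    intro Z
    have := e (fun t => - Z t)
    simp only [mul_neg, Finset.sum_neg_distrib, ← sub_eq_add_neg] at this
    exact this
  rw [e, e', e', hS] at key
  have h2 : N - ∑ t, q t * M t ≤ Real.sqrt ((1 - ρ ^ 2) * N ^ 2) := by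
    apply Real.le_sqrt_of_sq_le
    nlinarith
  rw [Real.sqrt_mul' _ (sq_nonneg N), Real.sqrt_sq hN] at h2
  linarith

/-- **Cheeger inequality for projection games.** For a deterministic `[0,1]`-valued
fractional assignment `h` with `‖h‖ > 0` and `‖Gh‖² = ρ‖h‖²`, the threshold roundings
`h_τ(v,β) = [h(v,β)² > τ]` satisfy: (i) `∫₀¹ (∑_β h_τ(v,β))² dτ = (∑_β h(v,β))²` for
every `v`, and (ii) `∫₀¹ ‖G h_τ‖² dτ ≥ (1 - √(1-ρ²))·‖h‖²`. -/
theorem cheeger_projection_games (G : ProjGame) (h : G.Q2 × G.A → ℝ)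
    (h0 : ∀ p, 0 ≤ h p) (h1 : ∀ p, h p ≤ 1)
    (hdet : ∀ (v : G.Q2) (β β' : G.A), h (v, β) ≠ 0 → h (v, β') ≠ 0 → β = β')
    (hpos : 0 < Real.sqrt (G.normVsq h))
    (ρ : ℝ) (hρ0 : 0 ≤ ρ) (hρ1 : ρ ≤ 1)
    (hρ : G.normUsq (G.op h) = ρ * G.normVsq h) :
    (∀ v : G.Q2,
      (∫ τ in (0:ℝ)..1, (∑ β, if (h (v, β)) ^ 2 > τ then (1 : ℝ) else 0) ^ 2)
        = (∑ β, h (v, β)) ^ 2) ∧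
    ((1 - Real.sqrt (1 - ρ ^ 2)) * G.normVsq h
      ≤ ∫ τ in (0:ℝ)..1, G.normUsq (G.op (fun p => if (h p) ^ 2 > τ then 1 else 0))) := by
  have hb' : ∀ v : G.Q2, ∃ b : G.A, ∀ β, β ≠ b → h (v, β) = 0 := by
    intro v
    by_cases hv : ∃ b, h (v, b) ≠ 0
    · obtain ⟨b, hb⟩ := hv
      refine ⟨b, fun β hβ => ?_⟩
      by_contra hne
      exact hβ (hdet v β b hne hb)
    · push Not at hv
      exact ⟨Classical.arbitrary _, fun β _ => hv β⟩
  choose b hb using hb'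
  have hsq0 : ∀ p, 0 ≤ h p ^ 2 := fun p => sq_nonneg _
  have hsq1 : ∀ p, h p ^ 2 ≤ 1 := fun p => pow_le_one₀ (h0 p) (h1 p)
  have htz : ∀ τ : ℝ, 0 ≤ τ → ∀ v β, β ≠ b v → (if h (v, β) ^ 2 > τ then (1:ℝ) else 0) = 0 := by
    intro τ hτ v β hβ
    rw [hb v β hβ]
    simp [hτ]
  constructor
  · intro v
    have e1 : ∑ β, h (v, β) = h (v, b v) :=
      Finset.sum_eq_single (b v) (fun β _ hβ => hb v β hβ) (by simp)
    rw [e1, ← ch_int _ (hsq0 (v, b v)) (hsq1 (v, b v))]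
    apply intervalIntegral.integral_congr
    intro τ hτ
    rw [Set.uIcc_of_le zero_le_one] at hτ
    dsimp only
    rw [Finset.sum_eq_single (b v) (fun β _ hβ => htz τ hτ.1 v β hβ) (by simp)]
    split_ifs <;> simp
  · let I := G.Q2 × (G.A → Option G.A)
    let P : I → G.A → ℝ := chP G h
    have hP : ∀ i α, P i α = if i.2 (b i.1) = some α then h (i.1, b i.1) else 0 :=
      ch_P_single G h b hb
    have hP0 : ∀ i α, 0 ≤ P i α ^ 2 := fun i α => sq_nonneg _
    have hP1 : ∀ i α, P i α ^ 2 ≤ 1 := by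
      intro i α
      rw [hP]
      split_ifs
      · exact hsq1 _
      · norm_num
    let q : G.Q1 × I × I → ℝ := fun t => G.μ (t.1, t.2.1) * G.μ (t.1, t.2.2) / G.wU t.1
    let Xv : G.Q2 → ℝ := fun v => ∑ β, h (v, β) ^ 2
    have hPX : ∀ i : I, ∑ α, P i α ^ 2 ≤ Xv i.1 := by
      intro i
      have e1 : Xv i.1 = h (i.1, b i.1) ^ 2 :=
        Finset.sum_eq_single (b i.1) (fun β _ hβ => by rw [hb i.1 β hβ]; norm_num) (by simp)
      rw [e1]
      simp only [hP]
      cases hc : i.2 (b i.1) with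
      | none => simpa using hsq0 _
      | some a => simp
    have hint : (∫ τ in (0:ℝ)..1, G.normUsq (G.op (fun p => if (h p) ^ 2 > τ then 1 else 0)))
        = ∑ t, q t * ∑ α, min (P t.2.1 α ^ 2) (P t.2.2 α ^ 2) := by
      have e1 : (∫ τ in (0:ℝ)..1, G.normUsq (G.op (fun p => if (h p) ^ 2 > τ then 1 else 0)))
          = ∫ τ in (0:ℝ)..1, ∑ t, q t * ∑ α,
            (if min (P t.2.1 α ^ 2) (P t.2.2 α ^ 2) > τ then (1:ℝ) else 0) := by
        apply intervalIntegral.integral_congr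
        intro τ hτ
        rw [Set.uIcc_of_le zero_le_one] at hτ
        dsimp only
        rw [ch_norm]
        have e2 : ∀ (i : I) α, chP G (fun p => if (h p) ^ 2 > τ then 1 else 0) i α
            = if P i α ^ 2 > τ then (1:ℝ) else 0 := by
          intro i α
          rw [ch_P_single G _ b (htz τ hτ.1), hP]
          by_cases hc : i.2 (b i.1) = some α
          · simp [hc]
          · simp [hc, hτ.1]
        simp only [Fintype.sum_prod_type (α₁ := G.Q1), Fintype.sum_prod_type (α₁ := I)]
        refine Finset.sum_congr rfl fun u _ => ?_
        refine Finset.sum_congr rfl fun i _ => ?_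
        refine Finset.sum_congr rfl fun j _ => ?_
        refine congrArg _ ?_
        refine Finset.sum_congr rfl fun α _ => ?_
        rw [e2, e2, ch_mulind]
      rw [e1, intervalIntegral.integral_finsetSum]
      · refine Finset.sum_congr rfl fun t _ => ?_
        rw [intervalIntegral.integral_const_mul, intervalIntegral.integral_finsetSum]
        · refine congrArg _ (Finset.sum_congr rfl fun α _ => ?_)
          exact ch_int _ (le_min (hP0 _ _) (hP0 _ _)) ((min_le_left _ _).trans (hP1 _ _))
        · intro α _; exact ch_ii _ _ _
      · intro t _
        apply IntervalIntegrable.const_mul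
        apply Antitone.intervalIntegrable
        intro x y hxy
        refine Finset.sum_le_sum fun α _ => ?_
        split_ifs <;> first | linarith | norm_num
    rw [hint]
    refine ch_main q (fun t => Xv t.2.1.1) (fun t => Xv t.2.2.1)
      (fun t => ∑ α, P t.2.1 α * P t.2.2 α) _ _ ρ ?_ ?_ ?_ ?_ ?_ ?_ ?_ ?_
    · exact (Real.sqrt_pos.mp hpos).le
    · intro t
      exact div_nonneg (mul_nonneg (G.μ_nonneg _) (G.μ_nonneg _)) (ch_wU_nonneg G _)
    · intro t; exact ch_pt _ _ _ _ (hPX _) (hPX _)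
    · intro t; exact (ch_abs _ _ _ _ (hPX _) (hPX _)).1
    · intro t; exact (ch_abs _ _ _ _ (hPX _) (hPX _)).2
    · simp only [Fintype.sum_prod_type (α₁ := G.Q1), Fintype.sum_prod_type (α₁ := I)]
      exact ch_marg1 G Xv
    · simp only [Fintype.sum_prod_type (α₁ := G.Q1), Fintype.sum_prod_type (α₁ := I)]
      exact ch_marg2 G Xv
    · rw [← hρ, ch_norm]
      simp only [Fintype.sum_prod_type (α₁ := G.Q1), Fintype.sum_prod_type (α₁ := I)]
      rfl
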